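/- For any μ ≥ 1, σ > 0, and integer m ≥ 0, the m-th moment s_{m,σ,μ} = ∫_{-1}^{1} t^m g̃_{σ,μ}(t) dt satisfies: s_{m,σ,μ} = 0 if m is odd, and s_{2k,σ,μ} = γ^mod((2k+2μ-1)/(2(2μ-1)), 1/(2σ^{4μ-2})) / γ^mod(1/2, 1/(2σ^{4μ-2})) if m = 2k is even. -/

import Mathlib

open MeasureTheory

/-- Lower incomplete gamma function `γ(s,z) = ∫₀^z u^(s-1) e^(-u) du`. -/
noncomputable def lowGamma (s z : ℝ) : ℝ := ∫ u in (0:ℝ)..z, u ^ (s - 1) * Real.exp (-u)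

/-- Modified lower incomplete gamma function `γ^mod(s,z) = γ(s,z)/z^s`. -/
noncomputable def gammaMod (s z : ℝ) : ℝ := lowGamma s z / z ^ s

/-- Second family of densities `g̃_{σ,μ}` on `[-1,1]`. -/
noncomputable def gTilde (σ μ t : ℝ) : ℝ :=
  ((2 * μ - 1) / gammaMod (1 / 2) (1 / (2 * σ ^ (4 * μ - 2)))) *
    (t ^ 2) ^ (μ - 1) * Real.exp (-(1 / 2) * (t ^ 2 / σ ^ 2) ^ (2 * μ - 1))

/-!
Substituting `u = z * t ^ p` in `γ(s, z)` removes the factor `z ^ s`: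
`γ^mod(s, z) = p * ∫₀¹ t ^ (p * s - 1) * exp (-(z * t ^ p)) dt`. With `p = 4 * μ - 2` and
`z = 1 / (2 * σ ^ p)` the exponential factor is exactly that of `g̃_{σ,μ}`, so each moment over
`[0, 1]` is a value of `γ^mod`; the parity of `g̃_{σ,μ}` takes care of `[-1, 0]`.
-/

section Parity

variable {E : Type*} [NormedAddCommGroup E] [NormedSpace ℝ E] {f : ℝ → E}

theorem intervalIntegral_eq_zero_of_odd (hf : f.Odd) (a : ℝ) : ∫ x in (-a)..a, f x = 0 := by
  have hneg : ∫ x in (-a)..a, f x = -∫ x in (-a)..a, f x := by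
    simpa only [hf.eq, intervalIntegral.integral_neg, neg_neg] using
      (intervalIntegral.integral_comp_neg (a := -a) (b := a) f).symm
  have : IsAddTorsionFree E := .of_isTorsionFree ℝ E
  exact self_eq_neg.mp hneg

theorem intervalIntegral_eq_two_smul_of_even (hf : f.Even) (a : ℝ) :
    ∫ x in (-a)..a, f x = (2 : ℝ) • ∫ x in (0 : ℝ)..a, f x := by
  have hneg : ∫ x in (-a)..0, f x = ∫ x in (0 : ℝ)..a, f x := by
    simpa only [hf.eq, neg_zero] using
      (intervalIntegral.integral_comp_neg (a := 0) (b := a) f).symm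
  by_cases hint : IntervalIntegrable f volume 0 a
  · have hint_left : IntervalIntegrable f volume (-a) 0 := by
      simpa only [hf.eq, neg_zero] using ((IntervalIntegrable.iff_comp_neg).mp hint).symm
    rw [← intervalIntegral.integral_add_adjacent_intervals hint_left hint, hneg, two_smul]
  · have hint_symm : ¬IntervalIntegrable f volume (-a) a := fun h ↦ hint <| h.mono_set <|
      Set.uIcc_subset_uIcc_right (by simp [Set.mem_uIcc, le_total])
    rw [intervalIntegral.integral_undef hint, intervalIntegral.integral_undef hint_symm, smul_zero]

end Parity

section IncompleteGamma

variable {p z : ℝ}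

theorem intervalIntegral_comp_mul_rpow_mul_deriv {a : ℝ} (hp : 0 < p) (hz : 0 ≤ z) (ha : 0 ≤ a)
    (g : ℝ → ℝ) :
    ∫ t in (0 : ℝ)..a, g (z * t ^ p) * (z * (p * t ^ (p - 1))) =
      ∫ u in (0 : ℝ)..z * a ^ p, g u := by
  have hcont : ContinuousOn (fun t : ℝ ↦ z * t ^ p) (Set.uIcc 0 a) :=
    (continuous_const.mul (Real.continuous_rpow_const hp.le)).continuousOn
  have hpos : ∀ t ∈ Set.Ioo (min 0 a) (max 0 a), 0 < t := fun t ht ↦ by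
    simpa [ha] using ht.1
  have hsubst := intervalIntegral.integral_comp_mul_deriv_of_deriv_nonneg (g := g) hcont
    (fun t ht ↦ (Real.hasDerivAt_rpow_const (Or.inl (hpos t ht).ne')).const_mul z)
    (fun t ht ↦ have := hpos t ht; by positivity)
  simpa only [Real.zero_rpow hp.ne', mul_zero, Function.comp_apply] using hsubst

theorem lowGamma_mul_rpow {a : ℝ} (hp : 0 < p) (hz : 0 < z) (ha : 0 ≤ a) (s : ℝ) :
    lowGamma s (z * a ^ p) =
      z ^ s * (p * ∫ t in (0 : ℝ)..a, t ^ (p * s - 1) * Real.exp (-(z * t ^ p))) := by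
  rw [lowGamma, ← intervalIntegral_comp_mul_rpow_mul_deriv hp hz.le ha,
    ← intervalIntegral.integral_const_mul, ← intervalIntegral.integral_const_mul]
  refine intervalIntegral.integral_congr_Ioo_of_le ha fun t ht ↦ ?_
  have ht0 : 0 < t := ht.1
  have hpow : (z * t ^ p) ^ (s - 1) = z ^ s / z * t ^ (p * (s - 1)) := by
    rw [Real.mul_rpow hz.le (by positivity), Real.rpow_sub_one hz.ne', Real.rpow_mul ht0.le]
  have hpow_sub : t ^ (p * s - 1) = t ^ (p * (s - 1)) * t ^ (p - 1) := by
    rw [← Real.rpow_add ht0]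
    ring_nf
  simp only [hpow, hpow_sub]
  field_simp

theorem gammaMod_eq_mul_integral (hp : 0 < p) (hz : 0 < z) (s : ℝ) :
    gammaMod s z = p * ∫ t in (0 : ℝ)..1, t ^ (p * s - 1) * Real.exp (-(z * t ^ p)) := by
  have hlow := lowGamma_mul_rpow hp hz zero_le_one s
  rw [Real.one_rpow, mul_one] at hlow
  rw [gammaMod, hlow, mul_div_cancel_left₀ _ (Real.rpow_pos_of_pos hz s).ne']

end IncompleteGamma

section Density

variable {σ μ : ℝ}

theorem gTilde_even (σ μ : ℝ) : (gTilde σ μ).Even := fun t ↦ by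
  simp only [gTilde, neg_sq]

theorem gTilde_eq_of_pos {t : ℝ} (hσ : 0 < σ) (ht : 0 < t) :
    gTilde σ μ t = (2 * μ - 1) / gammaMod (1 / 2) (1 / (2 * σ ^ (4 * μ - 2))) *
      t ^ (2 * μ - 2) * Real.exp (-(1 / (2 * σ ^ (4 * μ - 2)) * t ^ (4 * μ - 2))) := by
  have hsq {x : ℝ} (hx : 0 < x) (q : ℝ) : (x ^ 2) ^ q = x ^ (2 * q) := by
    rw [Real.rpow_mul hx.le, Real.rpow_two]
  rw [gTilde, Real.div_rpow (sq_nonneg t) (sq_nonneg σ), hsq ht, hsq ht, hsq hσ,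
    show 2 * (μ - 1) = 2 * μ - 2 by ring, show 2 * (2 * μ - 1) = 4 * μ - 2 by ring]
  congr 2
  field_simp

theorem integral_zero_one_rpow_mul_gTilde (hσ : 0 < σ) (hμ : 1 / 2 < μ) (r : ℝ) :
    ∫ t in (0 : ℝ)..1, t ^ r * gTilde σ μ t =
      gammaMod ((r + 2 * μ - 1) / (2 * (2 * μ - 1))) (1 / (2 * σ ^ (4 * μ - 2))) /
        gammaMod (1 / 2) (1 / (2 * σ ^ (4 * μ - 2))) / 2 := by
  have hμ' : 2 * μ - 1 ≠ 0 := by linarith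
  have hexponent :
      (4 * μ - 2) * ((r + 2 * μ - 1) / (2 * (2 * μ - 1))) - 1 = r + (2 * μ - 2) := by
    rw [show 4 * μ - 2 = 2 * (2 * μ - 1) by ring, mul_div_cancel₀ _ (mul_ne_zero two_ne_zero hμ')]
    ring
  rw [gammaMod_eq_mul_integral (p := 4 * μ - 2) (by linarith) (by positivity)
      ((r + 2 * μ - 1) / (2 * (2 * μ - 1))), hexponent, mul_div_right_comm, mul_div_right_comm,
    ← intervalIntegral.integral_const_mul]
  refine intervalIntegral.integral_congr_Ioo_of_le zero_le_one fun t ht ↦ ?_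
  simp only [gTilde_eq_of_pos hσ ht.1, Real.rpow_add ht.1]
  ring

theorem integral_abs_rpow_mul_gTilde (hσ : 0 < σ) (hμ : 1 / 2 < μ) (r : ℝ) :
    ∫ t in (-1 : ℝ)..1, |t| ^ r * gTilde σ μ t =
      gammaMod ((r + 2 * μ - 1) / (2 * (2 * μ - 1))) (1 / (2 * σ ^ (4 * μ - 2))) /
        gammaMod (1 / 2) (1 / (2 * σ ^ (4 * μ - 2))) := by
  have heven : Function.Even fun t : ℝ ↦ |t| ^ r * gTilde σ μ t := fun t ↦ by
    simp only [abs_neg, (gTilde_even σ μ).eq]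
  have habs : ∫ t in (0 : ℝ)..1, |t| ^ r * gTilde σ μ t = ∫ t in (0 : ℝ)..1, t ^ r * gTilde σ μ t :=
    intervalIntegral.integral_congr_Ioo_of_le zero_le_one fun t ht ↦ by
      simp only [abs_of_pos ht.1]
  rw [intervalIntegral_eq_two_smul_of_even heven, habs, integral_zero_one_rpow_mul_gTilde hσ hμ,
    smul_eq_mul, mul_div_cancel₀ _ two_ne_zero]

theorem integral_even_pow_mul_gTilde (hσ : 0 < σ) (hμ : 1 / 2 < μ) (k : ℕ) :
    ∫ t in (-1 : ℝ)..1, t ^ (2 * k) * gTilde σ μ t =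
      gammaMod ((2 * (k : ℝ) + 2 * μ - 1) / (2 * (2 * μ - 1))) (1 / (2 * σ ^ (4 * μ - 2))) /
        gammaMod (1 / 2) (1 / (2 * σ ^ (4 * μ - 2))) := by
  have hpow (t : ℝ) : |t| ^ (2 * (k : ℝ)) = t ^ (2 * k) := by
    rw [← (even_two_mul k).pow_abs t, ← Real.rpow_natCast, Nat.cast_mul, Nat.cast_ofNat]
  simpa only [hpow] using integral_abs_rpow_mul_gTilde hσ hμ (2 * k)

theorem integral_odd_pow_mul_gTilde {m : ℕ} (hm : Odd m) (σ μ : ℝ) :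
    ∫ t in (-1 : ℝ)..1, t ^ m * gTilde σ μ t = 0 :=
  intervalIntegral_eq_zero_of_odd
    (fun t ↦ by simp only [hm.neg_pow, (gTilde_even σ μ).eq, neg_mul]) 1

theorem gTilde_moments_general (hσ : 0 < σ) (hμ : 1 / 2 < μ) (m : ℕ) :
    (Odd m → ∫ t in (-1 : ℝ)..1, t ^ m * gTilde σ μ t = 0) ∧
    (∀ k : ℕ, m = 2 * k →
      ∫ t in (-1 : ℝ)..1, t ^ m * gTilde σ μ t
        = gammaMod ((2 * (k : ℝ) + 2 * μ - 1) / (2 * (2 * μ - 1))) (1 / (2 * σ ^ (4 * μ - 2)))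
          / gammaMod (1 / 2) (1 / (2 * σ ^ (4 * μ - 2)))) :=
  ⟨fun hm ↦ integral_odd_pow_mul_gTilde hm σ μ,
    fun k hk ↦ hk ▸ integral_even_pow_mul_gTilde hσ hμ k⟩

end Density

/-- Moments of `g̃_{σ,μ}`: the odd moments vanish and the even moments are
ratios of modified incomplete gamma functions. -/
theorem gTilde_moments (σ μ : ℝ) (hσ : 0 < σ) (hμ : 1 ≤ μ) (m : ℕ) :
    (Odd m → ∫ t in (-1:ℝ)..1, t ^ m * gTilde σ μ t = 0) ∧
    (∀ k : ℕ, m = 2 * k →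
      ∫ t in (-1:ℝ)..1, t ^ m * gTilde σ μ t
        = gammaMod ((2 * (k:ℝ) + 2 * μ - 1) / (2 * (2 * μ - 1))) (1 / (2 * σ ^ (4 * μ - 2)))
          / gammaMod (1 / 2) (1 / (2 * σ ^ (4 * μ - 2)))) :=
  gTilde_moments_general hσ (by linarith) m
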